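/- Let G be a finite abelian non-cyclic group. Then the complement graph Γ̄_G does not have both an isolated vertex (a vertex adjacent to no other vertex of Γ̄_G) and a vertex of degree exactly 1. -/

import Mathlib

/-- The cyclicizer of a group `G`: the set of `y` such that `⟨x, y⟩` is cyclic
for every `x ∈ G`. -/
def cyclicizer (G : Type*) [Group G] : Set G :=
  {y | ∀ x : G, IsCyclic (Subgroup.closure ({x, y} : Set G))}

theorem cyc_iff {G : Type*} [Group G] (a b : G) :
    IsCyclic (Subgroup.closure ({a, b} : Set G)) ↔
      ∃ g : G, a ∈ Subgroup.zpowers g ∧ b ∈ Subgroup.zpowers g := by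
  constructor
  · intro h
    obtain ⟨g, hg⟩ := h.exists_generator
    refine ⟨g, ?_, ?_⟩
    · obtain ⟨n, hn⟩ := Subgroup.mem_zpowers_iff.1
        (hg ⟨a, Subgroup.subset_closure (by simp)⟩)
      exact Subgroup.mem_zpowers_iff.2 ⟨n, by simpa using congrArg Subtype.val hn⟩
    · obtain ⟨n, hn⟩ := Subgroup.mem_zpowers_iff.1
        (hg ⟨b, Subgroup.subset_closure (by simp)⟩)
      exact Subgroup.mem_zpowers_iff.2 ⟨n, by simpa using congrArg Subtype.val hn⟩
  · rintro ⟨g, ha, hb⟩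
    have hle : Subgroup.closure ({a, b} : Set G) ≤ Subgroup.zpowers g := by
      rw [Subgroup.closure_le]
      rintro z (rfl | rfl)
      · exact ha
      · exact hb
    exact isCyclic_of_injective (Subgroup.inclusion hle) (Subgroup.inclusion_injective hle)

theorem mem_cyc_iff {G : Type*} [Group G] (y : G) :
    y ∈ cyclicizer G ↔
      ∀ x : G, ∃ g : G, x ∈ Subgroup.zpowers g ∧ y ∈ Subgroup.zpowers g := by
  simp only [cyclicizer, Set.mem_setOf_eq, cyc_iff]

theorem invol_unique {G : Type*} [CommGroup G] [Finite G] (g y w : G)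
    (hy : y ∈ Subgroup.zpowers g) (hw : w ∈ Subgroup.zpowers g)
    (hy2 : y ^ 2 = 1) (hw2 : w ^ 2 = 1) (hy1 : y ≠ 1) (hw1 : w ≠ 1) : w = y := by
  classical
  by_contra hne
  have : Fintype (Subgroup.zpowers g) := Fintype.ofFinite _
  have hc := IsCyclic.card_pow_eq_one_le (α := Subgroup.zpowers g) (n := 2) (by norm_num)
  have hsub : ({1, ⟨y, hy⟩, ⟨w, hw⟩} : Finset (Subgroup.zpowers g)) ⊆
      Finset.univ.filter (fun a => a ^ 2 = 1) := by
    intro z hz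
    simp only [Finset.mem_insert, Finset.mem_singleton] at hz
    rcases hz with rfl | rfl | rfl
    · simp
    · simp [Subtype.ext_iff, hy2]
    · simp [Subtype.ext_iff, hw2]
  have h3 : ({1, ⟨y, hy⟩, ⟨w, hw⟩} : Finset (Subgroup.zpowers g)).card = 3 := by
    rw [Finset.card_eq_three]
    refine ⟨_, _, _, ?_, ?_, ?_, rfl⟩
    · simpa [Subtype.ext_iff] using Ne.symm hy1
    · simpa [Subtype.ext_iff] using Ne.symm hw1
    · simpa [Subtype.ext_iff] using Ne.symm hne
  have := Finset.card_le_card hsub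
  omega

theorem abelian_not_isolated_and_degree_one (G : Type*) [CommGroup G] [Finite G]
    (hG : ¬ IsCyclic G) :
    ¬ ((∃ x : G, x ∉ cyclicizer G ∧
          ∀ z : G, z ∉ cyclicizer G → z ≠ x →
            ¬ IsCyclic (Subgroup.closure ({x, z} : Set G))) ∧
       (∃ y w : G, y ∉ cyclicizer G ∧ w ∉ cyclicizer G ∧ w ≠ y ∧
          IsCyclic (Subgroup.closure ({y, w} : Set G)) ∧
          ∀ z : G, z ∉ cyclicizer G → z ≠ y →
            IsCyclic (Subgroup.closure ({y, z} : Set G)) → z = w)) := by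
  simp only [cyc_iff]
  rintro ⟨⟨x, hx, hiso⟩, y, w, hy, hw, hwy, ⟨g, hyg, hwg⟩, huniq⟩
  have one_mem : (1 : G) ∈ cyclicizer G := by
    rw [mem_cyc_iff]
    exact fun a => ⟨a, Subgroup.mem_zpowers a, one_mem _⟩
  have inv_cyc : ∀ a : G, a⁻¹ ∈ cyclicizer G → a ∈ cyclicizer G := by
    intro a ha
    rw [mem_cyc_iff] at ha ⊢
    intro b
    obtain ⟨k, h1, h2⟩ := ha b
    exact ⟨k, h1, inv_mem_iff.1 h2⟩
  -- an isolated vertex is an involution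
  have hxinv : x⁻¹ = x := by
    by_contra hne
    exact hiso x⁻¹ (fun h => hx (inv_cyc x h)) hne
      ⟨x, Subgroup.mem_zpowers x, inv_mem (Subgroup.mem_zpowers x)⟩
  -- the cyclicizer is trivial
  have triv : ∀ c ∈ cyclicizer G, c = 1 := by
    intro c hc
    have hc' := (mem_cyc_iff c).1 hc
    have hxc : x * c ∉ cyclicizer G := by
      intro h
      apply hx
      rw [mem_cyc_iff] at h ⊢
      intro a
      obtain ⟨k, h1, h2⟩ := h a
      obtain ⟨l, h3, h4⟩ := hc' k
      have hle : Subgroup.zpowers k ≤ Subgroup.zpowers l := by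
        rwa [Subgroup.zpowers_le]
      exact ⟨l, hle h1, (Subgroup.mul_mem_cancel_right _ h4).1 (hle h2)⟩
    by_contra hne
    obtain ⟨k, h1, h2⟩ := hc' x
    exact hiso (x * c) hxc (by simpa using hne) ⟨k, h1, mul_mem h1 h2⟩
  have hx2 : x ^ 2 = 1 := by
    rw [pow_two]
    nth_rewrite 1 [← hxinv]
    simp
  have hy1 : y ≠ 1 := fun h => hy (h ▸ one_mem)
  have hw1 : w ≠ 1 := fun h => hw (h ▸ one_mem)
  by_cases hy2 : y ^ 2 = 1
  · have hwinv : w⁻¹ = w := by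
      refine huniq w⁻¹ (fun h => hw (inv_cyc w h)) ?_ ⟨g, hyg, inv_mem hwg⟩
      intro h
      apply hwy
      rw [← inv_inv w, h]
      rw [inv_eq_iff_mul_eq_one, ← pow_two, hy2]
    have hw2 : w ^ 2 = 1 := by
      rw [pow_two]
      nth_rewrite 1 [← hwinv]
      simp
    exact hwy (invol_unique g y w hyg hwg hy2 hw2 hy1 hw1)
  · have e1 : y ^ 2 = w := by
      refine huniq _ (fun h => hy2 (triv _ h)) ?_
        ⟨y, Subgroup.mem_zpowers y, pow_mem (Subgroup.mem_zpowers y) 2⟩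
      intro h
      exact hy1 (by simpa [pow_two] using h)
    have e2 : y⁻¹ = w := by
      refine huniq _ (fun h => hy (inv_cyc y h)) ?_
        ⟨y, Subgroup.mem_zpowers y, inv_mem (Subgroup.mem_zpowers y)⟩
      intro h
      apply hy2
      rwa [inv_eq_iff_mul_eq_one, ← pow_two] at h
    have hy3 : y ^ 3 = 1 := by
      rw [pow_succ, e1, ← e2]
      simp
    refine hiso y hy (fun h => hy2 (h ▸ hx2)) ⟨x * y, ?_, ?_⟩
    · have : (x * y) ^ 3 = x := by
        rw [mul_pow, hy3, mul_one, pow_succ, hx2, one_mul]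
      have h := pow_mem (Subgroup.mem_zpowers (x * y)) 3
      rwa [this] at h
    · have : (x * y) ^ 4 = y := by
        rw [mul_pow, pow_succ y 3, hy3, one_mul, show 4 = 2 * 2 from rfl, pow_mul, hx2,
          one_pow, one_mul]
      have h := pow_mem (Subgroup.mem_zpowers (x * y)) 4
      rwa [this] at h
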